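/- There is a constant C, depending only on φ, such that for all λ ≥ 1, all real a ≠ 0 and all b ∈ ℝ: |∫_ℝ φ²(ξ/λ) e^{i(a ξ² + b ξ)} dξ| ≤ C λ^{1/2} (λ |a|)^{-1/2}; equivalently, with a = λ^{-1}(t-s) for t ≠ s, |∫_ℝ φ²(ξ/λ) e^{i(λ^{-1}(t-s) ξ² + (x-y) ξ)} dξ| ≤ C λ^{1/2} |t-s|^{-1/2}. -/

import Mathlib

open MeasureTheory Real Complex

noncomputable section

/-- A smooth even bump equal to `1` on `[-1,1]` and supported in `(-2,2)`. -/
structure IsBump (φ : ℝ → ℝ) : Prop where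
  smooth : ContDiff ℝ (⊤ : ℕ∞) φ
  even : ∀ x, φ (-x) = φ x
  supp : Function.support φ ⊆ Set.Ioo (-2) 2
  one : ∀ x ∈ Set.Icc (-1 : ℝ) 1, φ x = 1

/-!
On the whole line the Fresnel phase has the approximate primitive
`K(x) = x e^{iax²} / (1 + 2iax²)`: it behaves like the primitive `e^{iax²} / (2iax)` produced by
integration by parts at infinity, but has no singularity at the stationary point `x = 0`. It is
`O(|a|^{-1/2})`, and the error `e^{iax²} - K'(x)` is `O(1 / (1 + |a| x²))`, whose integral is again
`O(|a|^{-1/2})`. Completing the square, `∫ e^{i(aξ² + bξ)} dξ` over any interval is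
`O(|a|^{-1/2})` uniformly in `b`. One integration by parts against the amplitude costs the `L¹` norm
of the derivative of the amplitude, which is invariant under dilation.
-/

lemma integrable_inv_one_add_mul_sq {c : ℝ} (hc : c ≠ 0) :
    Integrable fun x : ℝ => (1 + (c * x) ^ 2)⁻¹ :=
  integrable_inv_one_add_sq.comp_mul_left' hc

lemma integral_inv_one_add_mul_sq (c : ℝ) : ∫ x : ℝ, (1 + (c * x) ^ 2)⁻¹ = π / |c| := by
  rw [Measure.integral_comp_mul_left (fun x : ℝ => (1 + x ^ 2)⁻¹), integral_univ_inv_one_add_sq,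
    abs_inv, smul_eq_mul, inv_mul_eq_div]

/-- The approximate primitive `x e^{iax²} / (1 + 2iax²)` of the Fresnel phase `e^{iax²}`. -/
def fresnelPrimitive (a x : ℝ) : ℂ :=
  cexp (I * (a * x ^ 2)) * (x / (1 + 2 * I * (a * x ^ 2)))

/-- The error `e^{iax²} - K'(x)` made by the approximate primitive `K = fresnelPrimitive a`. -/
def fresnelError (a x : ℝ) : ℂ :=
  cexp (I * (a * x ^ 2)) * (4 * I * (a * x ^ 2) / (1 + 2 * I * (a * x ^ 2)) ^ 2)

section Fresnel

variable (a b x y : ℝ)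

lemma norm_cexp_I_mul_quadratic : ‖cexp (I * (a * x ^ 2 + b * x))‖ = 1 := by
  exact_mod_cast norm_exp_I_mul_ofReal (a * x ^ (2 : ℕ) + b * x)

lemma norm_cexp_I_mul_sq : ‖cexp (I * (a * x ^ 2))‖ = 1 := by
  exact_mod_cast norm_exp_I_mul_ofReal (a * x ^ (2 : ℕ))

lemma sq_norm_one_add_two_mul_I_mul_sq :
    ‖(1 + 2 * I * (a * x ^ 2) : ℂ)‖ ^ 2 = 1 + 4 * (a * x ^ 2) ^ 2 := by
  have h : (1 + 2 * I * (a * x ^ 2) : ℂ) = (1 : ℝ) + (2 * (a * x ^ 2) : ℝ) * I := by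
    push_cast
    ring
  rw [h, Complex.sq_norm, normSq_add_mul_I]
  ring

lemma one_add_two_mul_I_mul_sq_ne_zero : (1 + 2 * I * (a * x ^ 2) : ℂ) ≠ 0 := by
  have h : 0 < ‖(1 + 2 * I * (a * x ^ 2) : ℂ)‖ ^ 2 := by
    rw [sq_norm_one_add_two_mul_I_mul_sq]
    positivity
  exact norm_ne_zero_iff.1 (pow_ne_zero_iff two_ne_zero |>.1 h.ne')

lemma hasDerivAt_fresnelPrimitive :
    HasDerivAt (fresnelPrimitive a) (cexp (I * (a * x ^ 2)) - fresnelError a x) x := by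
  have hsq : HasDerivAt (fun z : ℂ => a * z ^ 2) (2 * a * x) x :=
    ((hasDerivAt_pow 2 (x : ℂ)).const_mul (a : ℂ)).congr_deriv (by push_cast; ring)
  have hden : HasDerivAt (fun z : ℂ => 1 + 2 * I * (a * z ^ 2)) (2 * I * (2 * a * x)) x :=
    (hsq.const_mul _).const_add _
  have hne := one_add_two_mul_I_mul_sq_ne_zero a x
  refine (((hsq.const_mul I).cexp.mul ((hasDerivAt_id' (x : ℂ)).div hden hne)).comp_ofReal
    ).congr_deriv ?_
  simp only [fresnelError, Pi.div_apply]
  generalize hD : (1 + 2 * I * (a * x ^ 2) : ℂ) = D at hne ⊢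
  field_simp
  linear_combination D * hD

lemma continuous_fresnelError : Continuous (fresnelError a) :=
  Continuous.mul (by fun_prop) <| Continuous.div (by fun_prop) (by fun_prop) fun x =>
    pow_ne_zero 2 (one_add_two_mul_I_mul_sq_ne_zero a x)

lemma norm_fresnelError_le : ‖fresnelError a x‖ ≤ 2 * (1 + (√|a| * x) ^ 2)⁻¹ := by
  have hnorm : ‖fresnelError a x‖ = 4 * (|a| * x ^ 2) / (1 + 4 * (|a| * x ^ 2) ^ 2) := by
    rw [fresnelError, norm_mul, norm_cexp_I_mul_sq, one_mul, norm_div, norm_pow,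
      sq_norm_one_add_two_mul_I_mul_sq]
    simp [mul_pow]
  rw [hnorm, mul_pow √|a|, Real.sq_sqrt (abs_nonneg a), ← div_eq_mul_inv,
    div_le_div_iff₀ (by positivity) (by positivity)]
  nlinarith [sq_nonneg (2 * (|a| * x ^ 2) - 1)]

variable {a} (ha : a ≠ 0)
include ha

lemma norm_fresnelPrimitive_le : ‖fresnelPrimitive a x‖ ≤ 1 / (2 * √|a|) := by
  have hden : |x| * (2 * √|a|) ≤ ‖(1 + 2 * I * (a * x ^ 2) : ℂ)‖ := by
    refine le_of_sq_le_sq ?_ (norm_nonneg _)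
    rw [sq_norm_one_add_two_mul_I_mul_sq, mul_pow, mul_pow, Real.sq_sqrt (abs_nonneg a), sq_abs,
      mul_pow a, ← sq_abs a]
    nlinarith [sq_nonneg (2 * (|a| * x ^ 2) - 1)]
  rw [fresnelPrimitive, norm_mul, norm_cexp_I_mul_sq, one_mul, norm_div, norm_real,
    Real.norm_eq_abs, div_le_div_iff₀ (norm_pos_iff.2 (one_add_two_mul_I_mul_sq_ne_zero a x))
      (by positivity), one_mul]
  exact hden

lemma integrable_fresnelError : Integrable (fresnelError a) :=
  ((integrable_inv_one_add_mul_sq (by positivity)).const_mul 2).mono'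
    (continuous_fresnelError a).aestronglyMeasurable (.of_forall (norm_fresnelError_le a))

lemma integral_norm_fresnelError_le : ∫ x, ‖fresnelError a x‖ ≤ 2 * π / √|a| :=
  calc ∫ x, ‖fresnelError a x‖
      ≤ ∫ x : ℝ, 2 * (1 + (√|a| * x) ^ 2)⁻¹ :=
        integral_mono (integrable_fresnelError ha).norm
          ((integrable_inv_one_add_mul_sq (by positivity)).const_mul 2) (norm_fresnelError_le a)
    _ = 2 * π / √|a| := by
        rw [integral_const_mul, integral_inv_one_add_mul_sq, abs_of_nonneg (Real.sqrt_nonneg _),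
          mul_div_assoc]

theorem norm_integral_cexp_I_mul_sq_le :
    ‖∫ ξ in x..y, cexp (I * (a * ξ ^ 2))‖ ≤ (1 + 2 * π) / √|a| := by
  have hE : Continuous fun ξ : ℝ => cexp (I * (a * ξ ^ 2)) := by fun_prop
  have hR := continuous_fresnelError a
  have hFTC : (∫ ξ in x..y, cexp (I * (a * ξ ^ 2))) =
      fresnelPrimitive a y - fresnelPrimitive a x + ∫ ξ in x..y, fresnelError a ξ := by
    rw [← sub_eq_iff_eq_add, ← intervalIntegral.integral_sub (hE.intervalIntegrable _ _)
      (hR.intervalIntegrable _ _)]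
    exact intervalIntegral.integral_eq_sub_of_hasDerivAt
      (fun ξ _ => hasDerivAt_fresnelPrimitive a ξ) ((hE.sub hR).intervalIntegrable _ _)
  have herror : ‖∫ ξ in x..y, fresnelError a ξ‖ ≤ 2 * π / √|a| :=
    intervalIntegral.norm_integral_le_integral_norm_uIoc.trans <|
      (setIntegral_le_integral (integrable_fresnelError ha).norm
        (.of_forall fun _ => norm_nonneg _)).trans (integral_norm_fresnelError_le ha)
  calc ‖∫ ξ in x..y, cexp (I * (a * ξ ^ 2))‖
      ≤ ‖fresnelPrimitive a y‖ + ‖fresnelPrimitive a x‖ + ‖∫ ξ in x..y, fresnelError a ξ‖ := by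
        rw [hFTC]
        exact (norm_add_le _ _).trans (add_le_add_left (norm_sub_le _ _) _)
    _ ≤ 1 / (2 * √|a|) + 1 / (2 * √|a|) + 2 * π / √|a| :=
        add_le_add_three (norm_fresnelPrimitive_le y ha) (norm_fresnelPrimitive_le x ha) herror
    _ = (1 + 2 * π) / √|a| := by ring

theorem norm_integral_cexp_I_mul_quadratic_le :
    ‖∫ ξ in x..y, cexp (I * (a * ξ ^ 2 + b * ξ))‖ ≤ (1 + 2 * π) / √|a| := by
  have haC : (a : ℂ) ≠ 0 := ofReal_ne_zero.2 ha
  have hsquare (ξ : ℝ) : cexp (I * (a * ξ ^ 2 + b * ξ)) =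
      cexp (I * (-(b ^ 2 / (4 * a)) : ℝ)) * cexp (I * (a * ((ξ + b / (2 * a) : ℝ) : ℂ) ^ 2)) := by
    rw [← Complex.exp_add]
    congr 1
    push_cast
    field_simp
    ring
  simp_rw [hsquare]
  rw [intervalIntegral.integral_const_mul, norm_mul, norm_exp_I_mul_ofReal, one_mul,
    intervalIntegral.integral_comp_add_right fun ξ : ℝ => cexp (I * (a * (ξ : ℂ) ^ 2))]
  exact norm_integral_cexp_I_mul_sq_le _ _ ha

end Fresnel

theorem norm_integral_mul_le_of_norm_primitive_le {A : Type*} [NormedRing A] [NormedAlgebra ℝ A]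
    {u u' v v' : ℝ → A} {M : ℝ} (hu : ∀ x, HasDerivAt u (u' x) x)
    (hv : ∀ x, HasDerivAt v (v' x) x) (hu_int : Integrable u) (hu'_int : Integrable u')
    (huv' : Integrable (u * v')) (hM : ∀ x, ‖v x‖ ≤ M) :
    ‖∫ x, u x * v' x‖ ≤ M * ∫ x, ‖u' x‖ := by
  have hv_meas : AEStronglyMeasurable v :=
    (continuous_iff_continuousAt.2 fun x => (hv x).continuousAt).aestronglyMeasurable
  rw [integral_mul_deriv_eq_deriv_mul_of_integrable (fun x _ => hu x) (fun x _ => hv x) huv'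
    (hu'_int.mul_bdd hv_meas (.of_forall hM)) (hu_int.mul_bdd hv_meas (.of_forall hM)), norm_neg,
    mul_comm, ← integral_mul_const]
  refine norm_integral_le_of_norm_le (hu'_int.norm.mul_const M) (.of_forall fun x => ?_)
  exact (norm_mul_le _ _).trans (mul_le_mul_of_nonneg_left (hM x) (norm_nonneg _))

theorem norm_integral_mul_cexp_I_mul_quadratic_le {u : ℝ → ℂ} (hu : Differentiable ℝ u)
    (hu_int : Integrable u) (hu'_int : Integrable (deriv u)) {a : ℝ} (ha : a ≠ 0) (b : ℝ) :
    ‖∫ ξ, u ξ * cexp (I * (a * ξ ^ 2 + b * ξ))‖ ≤ (1 + 2 * π) / √|a| * ∫ ξ, ‖deriv u ξ‖ := by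
  have hE : Continuous fun ξ : ℝ => cexp (I * (a * ξ ^ 2 + b * ξ)) := by fun_prop
  exact norm_integral_mul_le_of_norm_primitive_le (fun ξ => (hu ξ).hasDerivAt)
    (fun ξ => (hE.integral_hasStrictDerivAt 0 ξ).hasDerivAt) hu_int hu'_int
    (hu_int.mul_bdd hE.aestronglyMeasurable
      (.of_forall fun ξ => (norm_cexp_I_mul_quadratic a b ξ).le))
    fun ξ => norm_integral_cexp_I_mul_quadratic_le b 0 ξ ha

section Dilation

variable {E : Type*} [NormedAddCommGroup E] [NormedSpace ℝ E] (ψ : ℝ → E)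

lemma deriv_comp_div_const (c : ℝ) :
    deriv (fun x => ψ (x / c)) = fun x => c⁻¹ • deriv ψ (x / c) := by
  ext x
  simpa only [inv_mul_eq_div] using deriv_comp_mul_left c⁻¹ ψ x

lemma integral_norm_deriv_comp_div {c : ℝ} (hc : c ≠ 0) :
    ∫ x, ‖deriv (fun x => ψ (x / c)) x‖ = ∫ x, ‖deriv ψ x‖ := by
  simp_rw [deriv_comp_div_const, norm_smul]
  rw [integral_const_mul, Measure.integral_comp_div (fun x => ‖deriv ψ x‖), smul_eq_mul, norm_inv,
    Real.norm_eq_abs, inv_mul_cancel_left₀ (abs_ne_zero.2 hc)]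

end Dilation

theorem norm_integral_comp_div_mul_cexp_I_mul_quadratic_le {ψ : ℝ → ℂ} (hψ : Differentiable ℝ ψ)
    (hψ_int : Integrable ψ) (hψ'_int : Integrable (deriv ψ)) {c a : ℝ} (hc : c ≠ 0) (ha : a ≠ 0)
    (b : ℝ) :
    ‖∫ ξ : ℝ, ψ (ξ / c) * cexp (I * (a * ξ ^ 2 + b * ξ))‖ ≤
      (1 + 2 * π) / √|a| * ∫ ξ, ‖deriv ψ ξ‖ := by
  rw [← integral_norm_deriv_comp_div ψ hc]
  refine norm_integral_mul_cexp_I_mul_quadratic_le (by fun_prop) (hψ_int.comp_div hc) ?_ ha b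
  rw [deriv_comp_div_const]
  exact (hψ'_int.comp_div hc).smul c⁻¹

lemma rpow_half_mul_mul_rpow_neg_half {x y : ℝ} (hx : 0 < x) (hy : 0 ≤ y) :
    x ^ ((1 : ℝ) / 2) * (x * y) ^ (-(1 : ℝ) / 2) = (√y)⁻¹ := by
  rw [neg_div, Real.rpow_neg (by positivity), ← Real.sqrt_eq_rpow, ← Real.sqrt_eq_rpow,
    Real.sqrt_mul hx.le, mul_inv, mul_inv_cancel_left₀ (Real.sqrt_pos.2 hx).ne']

theorem stationary_phase_bound_general {ψ : ℝ → ℂ} (hψ : Differentiable ℝ ψ)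
    (hψ_int : Integrable ψ) (hψ'_int : Integrable (deriv ψ)) :
    ∃ C : ℝ, 0 < C ∧
      ∀ lam : ℝ, 0 < lam →
        (∀ a b : ℝ, a ≠ 0 →
          ‖∫ ξ : ℝ, ψ (ξ / lam) * cexp (I * (a * ξ ^ 2 + b * ξ))‖
            ≤ C * lam ^ ((1 : ℝ) / 2) * (lam * |a|) ^ (-(1 : ℝ) / 2))
        ∧ (∀ x y t s : ℝ, t ≠ s →
          ‖∫ ξ : ℝ, ψ (ξ / lam) * cexp (I * (((t - s) / lam) * ξ ^ 2 + (x - y) * ξ))‖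
            ≤ C * lam ^ ((1 : ℝ) / 2) * |t - s| ^ (-(1 : ℝ) / 2)) := by
  set K := (1 + 2 * π) * ∫ ξ, ‖deriv ψ ξ‖ with hK_def
  have hK : 0 ≤ K := by positivity
  -- The summand `1` keeps the constant positive when `ψ = 0`.
  refine ⟨K + 1, add_pos_of_nonneg_of_pos hK one_pos, fun lam hlam => ?_⟩
  have hquad (a b : ℝ) (ha : a ≠ 0) :
      ‖∫ ξ : ℝ, ψ (ξ / lam) * cexp (I * (a * ξ ^ 2 + b * ξ))‖
        ≤ (K + 1) * lam ^ ((1 : ℝ) / 2) * (lam * |a|) ^ (-(1 : ℝ) / 2) :=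
    calc ‖∫ ξ : ℝ, ψ (ξ / lam) * cexp (I * (a * ξ ^ 2 + b * ξ))‖
        ≤ (1 + 2 * π) / √|a| * ∫ ξ, ‖deriv ψ ξ‖ :=
          norm_integral_comp_div_mul_cexp_I_mul_quadratic_le hψ hψ_int hψ'_int hlam.ne' ha b
      _ = K * (√|a|)⁻¹ := by rw [hK_def]; ring
      _ ≤ (K + 1) * (√|a|)⁻¹ := by gcongr; exact le_add_of_nonneg_right zero_le_one
      _ = (K + 1) * lam ^ ((1 : ℝ) / 2) * (lam * |a|) ^ (-(1 : ℝ) / 2) := by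
          rw [mul_assoc, rpow_half_mul_mul_rpow_neg_half hlam (abs_nonneg a)]
  refine ⟨hquad, fun x y t s hts => ?_⟩
  have habs : lam * |(t - s) / lam| = |t - s| := by
    rw [abs_div, abs_of_pos hlam, mul_div_cancel₀ _ hlam.ne']
  simpa only [habs, ofReal_div, ofReal_sub] using
    hquad ((t - s) / lam) (x - y) (div_ne_zero (sub_ne_zero.2 hts) hlam.ne')

namespace IsBump

variable {φ : ℝ → ℝ} (hφ : IsBump φ)
include hφ

lemma hasCompactSupport : HasCompactSupport φ :=
  .of_support_subset_isCompact isCompact_Icc (hφ.supp.trans Set.Ioo_subset_Icc_self)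

lemma hasCompactSupport_ofReal_sq : HasCompactSupport fun x => (φ x : ℂ) ^ 2 :=
  hφ.hasCompactSupport.comp_left (g := fun r : ℝ => (r : ℂ) ^ 2) (by simp)

lemma contDiff_ofReal_sq : ContDiff ℝ 1 fun x => (φ x : ℂ) ^ 2 :=
  (ofRealCLM.contDiff.comp (hφ.smooth.of_le (by simp))).pow 2

lemma integrable_ofReal_sq : Integrable fun x => (φ x : ℂ) ^ 2 :=
  hφ.contDiff_ofReal_sq.continuous.integrable_of_hasCompactSupport hφ.hasCompactSupport_ofReal_sq

lemma integrable_deriv_ofReal_sq : Integrable (deriv fun x => (φ x : ℂ) ^ 2) :=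
  (hφ.contDiff_ofReal_sq.continuous_deriv le_rfl).integrable_of_hasCompactSupport
    hφ.hasCompactSupport_ofReal_sq.deriv

end IsBump

/-- the stationary phase bound (estimate (6.19)) for the oscillatory
integral `∫ φ²(ξ/λ) e^{i(aξ² + bξ)} dξ`. -/
theorem stationary_phase_bound (φ : ℝ → ℝ) (hφ : IsBump φ) :
    ∃ C : ℝ, 0 < C ∧
      ∀ (lam : ℝ), 1 ≤ lam →
        (∀ (a b : ℝ), a ≠ 0 →
          ‖∫ ξ : ℝ, ((φ (ξ / lam) : ℝ) : ℂ) ^ 2 *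
              Complex.exp (Complex.I * (a * ξ ^ 2 + b * ξ))‖
            ≤ C * lam ^ ((1 : ℝ) / 2) * (lam * |a|) ^ (-(1 : ℝ) / 2))
        ∧ (∀ (x y t s : ℝ), t ≠ s →
          ‖∫ ξ : ℝ, ((φ (ξ / lam) : ℝ) : ℂ) ^ 2 *
              Complex.exp (Complex.I * (((t - s) / lam) * ξ ^ 2 + (x - y) * ξ))‖
            ≤ C * lam ^ ((1 : ℝ) / 2) * |t - s| ^ (-(1 : ℝ) / 2)) :=
  let ⟨C, hC, hbound⟩ := stationary_phase_bound_general
    (hφ.contDiff_ofReal_sq.differentiable one_ne_zero) hφ.integrable_ofReal_sq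
    hφ.integrable_deriv_ofReal_sq
  ⟨C, hC, fun lam hlam => hbound lam (one_pos.trans_le hlam)⟩
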